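/- For every natural number n ≥ 1 and every real z ≥ 0, j_n(z)² < e^{e·z − 2n}, where e is Euler's number. -/

import Mathlib

/-!
The bound rests on Poisson's integral
`j_n(z) = (z/2)^n / n! · ∫₀¹ cos(z t) (1 - t²)^n dt`,
obtained by expanding the cosine and integrating term by term: the moments
`∫₀¹ t^{2k} (1 - t²)^n dt` are Beta integrals (`integral_even_pow_mul_one_sub_sq_pow`).
The integrand is at most `1` in absolute value, so `|j_n(z)| ≤ (z/2)^n / n!` for `z ≥ 0`.
Multiplying by `e^n` turns the right-hand side into `(e z/2)^n / n!`, a single term of the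
exponential series of `e^{e z/2}`; as `n ≥ 1`, the constant term `1` of that series makes the
inequality strict. Squaring gives the claim.
-/

open Real

/-- The spherical Bessel function of the first kind, defined by its absolutely
convergent power series
`j_n(z) = Σ_{k=0}^∞ (−1)^k (√π/2) (z/2)^{n+2k} / (k! Γ(n+k+3/2))`. -/
noncomputable def sphericalBessel (n : ℕ) (z : ℝ) : ℝ :=
  ∑' k : ℕ, (-1 : ℝ) ^ k * (Real.sqrt π / 2) * (z / 2) ^ (n + 2 * k) /
    ((k.factorial : ℝ) * Real.Gamma ((n : ℝ) + (k : ℝ) + 3 / 2))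

lemma integral_even_pow_mul_one_sub_sq_pow (n k : ℕ) :
    ∫ t in (0 : ℝ)..1, t ^ (2 * k) * (1 - t ^ 2) ^ n =
      n.factorial * Gamma ((k : ℝ) + 1 / 2) / (2 * Gamma ((n : ℝ) + k + 3 / 2)) := by
  induction n generalizing k with
  | zero =>
    have hk : (0 : ℝ) < (k : ℝ) + 1 / 2 := by positivity
    have h : Gamma ((k : ℝ) + 3 / 2) = ((k : ℝ) + 1 / 2) * Gamma ((k : ℝ) + 1 / 2) := by
      rw [← Gamma_add_one hk.ne']; ring_nf
    have hG := (Gamma_pos_of_pos hk).ne'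
    simp only [pow_zero, mul_one, integral_pow, Nat.factorial_zero, Nat.cast_one, Nat.cast_zero,
      zero_add, h]
    push_cast
    field_simp
    simp
  | succ n ih =>
    have hsplit : ∫ t in (0 : ℝ)..1, t ^ (2 * k) * (1 - t ^ 2) ^ (n + 1) =
        (∫ t in (0 : ℝ)..1, t ^ (2 * k) * (1 - t ^ 2) ^ n) -
          ∫ t in (0 : ℝ)..1, t ^ (2 * (k + 1)) * (1 - t ^ 2) ^ n := by
      rw [← intervalIntegral.integral_sub
        (Continuous.intervalIntegrable (by fun_prop) _ _)
        (Continuous.intervalIntegrable (by fun_prop) _ _)]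
      congr 1
      ext t
      ring
    have hk : (0 : ℝ) < (k : ℝ) + 1 / 2 := by positivity
    have hnk : (0 : ℝ) < (n : ℝ) + k + 3 / 2 := by positivity
    have h₁ : Gamma (((k + 1 : ℕ) : ℝ) + 1 / 2) =
        ((k : ℝ) + 1 / 2) * Gamma ((k : ℝ) + 1 / 2) := by
      rw [← Gamma_add_one hk.ne']; push_cast; ring_nf
    have h₂ : Gamma ((n : ℝ) + ((k + 1 : ℕ) : ℝ) + 3 / 2) =
        ((n : ℝ) + k + 3 / 2) * Gamma ((n : ℝ) + k + 3 / 2) := by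
      rw [← Gamma_add_one hnk.ne']; push_cast; ring_nf
    have h₃ : Gamma (((n + 1 : ℕ) : ℝ) + k + 3 / 2) =
        ((n : ℝ) + k + 3 / 2) * Gamma ((n : ℝ) + k + 3 / 2) := by
      rw [← Gamma_add_one hnk.ne']; push_cast; ring_nf
    have hG := (Gamma_pos_of_pos hnk).ne'
    rw [hsplit, ih, ih, h₁, h₂, h₃, Nat.factorial_succ]
    push_cast
    field_simp
    ring

/-- Duplication formula at half-integers; it matches the `(2k)!` of the cosine series with the
`k!` of the Bessel series. -/
lemma Gamma_add_half_mul_factorial (k : ℕ) :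
    Gamma ((k : ℝ) + 1 / 2) * (4 ^ k * k.factorial) = (2 * k).factorial * √π := by
  induction k with
  | zero => simp [Gamma_one_half_eq, -one_div]
  | succ k ih =>
    have hk : (0 : ℝ) < (k : ℝ) + 1 / 2 := by positivity
    have h : Gamma (((k + 1 : ℕ) : ℝ) + 1 / 2) =
        ((k : ℝ) + 1 / 2) * Gamma ((k : ℝ) + 1 / 2) := by
      rw [← Gamma_add_one hk.ne']; push_cast; ring_nf
    have h2 : 2 * (k + 1) = 2 * k + 1 + 1 := by ring
    rw [h, h2, Nat.factorial_succ, Nat.factorial_succ, Nat.factorial_succ]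
    push_cast
    linear_combination ((2 * k + 1) * (2 * k + 2) : ℝ) * ih

/-- Poisson's integral representation. -/
lemma sphericalBessel_eq_integral (n : ℕ) (z : ℝ) :
    sphericalBessel n z =
      (z / 2) ^ n / n.factorial * ∫ t in (0 : ℝ)..1, cos (z * t) * (1 - t ^ 2) ^ n := by
  let F : ℕ → C(ℝ, ℝ) := fun k =>
    ⟨fun t => (-1) ^ k * (z * t) ^ (2 * k) / (2 * k).factorial * (1 - t ^ 2) ^ n, by fun_prop⟩
  have hsum : HasSum (fun k => ∫ t in (0 : ℝ)..1, F k t)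
      (∫ t in (0 : ℝ)..1, cos (z * t) * (1 - t ^ 2) ^ n) := by
    refine intervalIntegral.hasSum_integral_of_dominated_convergence
      (fun k _ => |z| ^ (2 * k) / (2 * k).factorial)
      (fun k => (F k).continuous.aestronglyMeasurable) ?_ ?_ ?_ ?_
    · refine fun k => Filter.Eventually.of_forall fun t ht => ?_
      rw [Set.uIoc_of_le zero_le_one] at ht
      have h₁ : |t| ^ (2 * k) ≤ 1 :=
        pow_le_one₀ (abs_nonneg t) (abs_le.2 ⟨by linarith [ht.1], ht.2⟩)
      have h₂ : |1 - t ^ 2| ^ n ≤ 1 :=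
        pow_le_one₀ (abs_nonneg _) (abs_le.2 ⟨by nlinarith [ht.1, ht.2], by nlinarith [ht.1]⟩)
      have h₃ : |t| ^ (2 * k) * |1 - t ^ 2| ^ n ≤ 1 := mul_le_one₀ h₁ (by positivity) h₂
      calc ‖F k t‖ = |z| ^ (2 * k) / (2 * k).factorial * (|t| ^ (2 * k) * |1 - t ^ 2| ^ n) := by
            simp only [F, ContinuousMap.coe_mk, norm_mul, norm_div, norm_pow, norm_neg, norm_one,
              one_pow, Real.norm_eq_abs, Nat.abs_cast]
            ring
        _ ≤ _ := mul_le_of_le_one_right (by positivity) h₃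
    · refine Filter.Eventually.of_forall fun t _ => ?_
      exact (Real.summable_pow_div_factorial |z|).comp_injective
        (i := fun k : ℕ => 2 * k) (mul_right_injective₀ two_ne_zero)
    · exact intervalIntegrable_const
    · exact Filter.Eventually.of_forall fun t _ => (Real.hasSum_cos (z * t)).mul_right _
  rw [← (hsum.mul_left _).tsum_eq, sphericalBessel]
  refine tsum_congr fun k => ?_
  have hF : ∫ t in (0 : ℝ)..1, F k t = (-1) ^ k * z ^ (2 * k) / (2 * k).factorial *
      ∫ t in (0 : ℝ)..1, t ^ (2 * k) * (1 - t ^ 2) ^ n := by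
    rw [← intervalIntegral.integral_const_mul]
    congr 1
    ext t
    simp only [F, ContinuousMap.coe_mk, mul_pow]
    ring
  have hG : Gamma ((n : ℝ) + k + 3 / 2) ≠ 0 := (Gamma_pos_of_pos (by positivity)).ne'
  have hΓ : Gamma ((k : ℝ) + 1 / 2) = (2 * k).factorial * √π / (4 ^ k * k.factorial) :=
    eq_div_of_mul_eq (by positivity) (Gamma_add_half_mul_factorial k)
  have h4 : (z / 2) ^ (n + 2 * k) = (z / 2) ^ n * (z ^ (2 * k) / 4 ^ k) := by
    rw [pow_add, div_pow z 2 (2 * k), pow_mul 2 2 k]; norm_num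
  rw [hF, integral_even_pow_mul_one_sub_sq_pow, hΓ, h4]
  field_simp

lemma abs_sphericalBessel_le (n : ℕ) {z : ℝ} (hz : 0 ≤ z) :
    |sphericalBessel n z| ≤ (z / 2) ^ n / n.factorial := by
  have hI : ‖∫ t in (0 : ℝ)..1, cos (z * t) * (1 - t ^ 2) ^ n‖ ≤ 1 * |1 - 0| := by
    refine intervalIntegral.norm_integral_le_of_norm_le_const fun t ht => ?_
    rw [Set.uIoc_of_le zero_le_one] at ht
    rw [norm_mul, norm_pow]
    refine mul_le_one₀ (abs_cos_le_one _) (by positivity) (pow_le_one₀ (norm_nonneg _) ?_)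
    exact abs_le.2 ⟨by nlinarith [ht.1, ht.2], by nlinarith [ht.1]⟩
  rw [sphericalBessel_eq_integral, abs_mul, abs_of_nonneg (by positivity)]
  exact mul_le_of_le_one_right (by positivity) (by simpa using hI)

/-- Strict because the exponential series also contains the term `1`, distinct from the `n`-th
one as `n ≠ 0`. -/
lemma pow_div_factorial_lt_exp_of_ne_zero {n : ℕ} (hn : n ≠ 0) {y : ℝ} (hy : 0 ≤ y) :
    y ^ n / n.factorial < exp y := by
  have h := Real.sum_le_exp_of_nonneg hy (n + 1)
  rw [Finset.sum_range_succ] at h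
  have h1 : (1 : ℝ) ≤ ∑ i ∈ Finset.range n, y ^ i / i.factorial := by
    simpa using Finset.single_le_sum (f := fun i : ℕ => y ^ i / (i.factorial : ℝ))
      (fun i _ => by positivity) (Finset.mem_range.2 (Nat.pos_of_ne_zero hn))
  linarith

/-- For every natural number `n ≥ 1` and every real `z ≥ 0`,
`j_n(z)² < e^{e z − 2n}`.  For `z = ωR/c` this is the key estimate behind
Theorem 3 of the paper: the SNR of the `n`-th mode at frequency `ω` is at most
`(SNR)_{α,max} · e^{eωR/c − 2n}`. -/
theorem sphericalBessel_sq_lt_exp (n : ℕ) (hn : 1 ≤ n) (z : ℝ) (hz : 0 ≤ z) :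
    (sphericalBessel n z) ^ 2 < Real.exp (Real.exp 1 * z - 2 * n) := by
  have hlt := pow_div_factorial_lt_exp_of_ne_zero (Nat.one_le_iff_ne_zero.1 hn)
    (y := exp 1 * (z / 2)) (by positivity)
  have hpow : (exp 1 * (z / 2)) ^ n / n.factorial = (z / 2) ^ n / n.factorial * exp n := by
    rw [mul_pow, ← exp_nat_mul, mul_one]
    ring
  have habs : |sphericalBessel n z| < exp (exp 1 * (z / 2) - n) := by
    refine (abs_sphericalBessel_le n hz).trans_lt ?_
    rwa [exp_sub, lt_div_iff₀ (exp_pos _), ← hpow]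
  calc sphericalBessel n z ^ 2 = |sphericalBessel n z| ^ 2 := (sq_abs _).symm
    _ < exp (exp 1 * (z / 2) - n) ^ 2 := pow_lt_pow_left₀ habs (abs_nonneg _) two_ne_zero
    _ = exp (exp 1 * z - 2 * n) := by
      rw [← exp_nat_mul]
      push_cast
      ring_nf
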